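/- arXiv:1703.03639 — 2 statements merged into one kernel-verified Lean document; each statement's English description precedes it below -/
import Mathlib

section
/- Suppose d, n ∈ ℕ are such that 3 ≤ d ≤ n/4 and S ⊆ V satisfies |S| ≤ n/6. Let H be a graph with vertex set S and let F be a bipartite graph with vertex partition (S, V∖S) such that Δ(F ∪ H) ≤ d. Let u ∈ S and v ∈ V∖S be such that uv ∉ E(F). Then the conditional probability, with respect to the uniform distribution on 𝒢_{n,d}, that uv ∈ E(G_{n,d}) given that G_{n,d}[S] = H and F ⊆ G_{n,d} is at most 6(d − d_H(u) − d_F(u))/n. Equivalently, |{G ∈ 𝒢_{n,d} : G[S] = H, F ⊆ G, uv ∈ E(G)}| ≤ (6(d − d_H(u) − d_F(u))/n) · |{G ∈ 𝒢_{n,d} : G[S] = H, F ⊆ G}|. -/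
open scoped Classical BigOperators

noncomputable section

/-!
Double counting of switchings. Let `G` be a `d`-regular graph with `G[S] = H`, `F ⊆ G` and
`uv ∈ E(G)`, and let `xy` be an edge of `G` outside `S` with `y ≠ v` and `ux, vy ∉ E(G)`. Replacing
`uv, xy` by `ux, vy` keeps all these properties except `uv ∈ E(G)`. Each `G` admits at least
`(n - 2(|S| + d)) d` pairs `(x, y)`, and the result `G'` together with `(x, y)` determines `G`.
Conversely, given `G'`, the vertex `x` is one of the `d - d_H(u) - d_F(u)` neighbours of `u` along
edges outside `H ∪ F`, and `y` is one of the `d` neighbours of `v`.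
-/

section Switching

open Finset SimpleGraph
open scoped symmDiff

variable {V : Type*} {G H F : SimpleGraph V} {S : Finset V} {d : ℕ} {u v x y : V}

theorem card_mul_le_card_mul_of_injective {α β γ : Type*} {s : Finset α} {t : Finset β}
    {P : α → Finset γ} {Q : β → Finset γ} {m k : ℕ} (f : γ → α → β)
    (hf : ∀ c, Function.Injective (f c))
    (hmaps : ∀ a ∈ s, ∀ c ∈ P a, f c a ∈ t ∧ c ∈ Q (f c a))
    (hP : ∀ a ∈ s, m ≤ #(P a)) (hQ : ∀ b ∈ t, #(Q b) ≤ k) : #s * m ≤ #t * k := by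
  have hsigma : #(s.sigma P) ≤ #(t.sigma Q) := by
    refine card_le_card_of_injOn (fun q ↦ ⟨f q.2 q.1, q.2⟩) ?_ ?_
    · rintro ⟨a, c⟩ hac
      simp only [coe_sigma, Set.mem_sigma_iff, mem_coe] at hac ⊢
      exact hmaps a hac.1 c hac.2
    · rintro ⟨a, c⟩ - ⟨a', c'⟩ - h
      simp only [Sigma.mk.injEq, heq_eq_eq] at h
      obtain ⟨h, rfl⟩ := h
      rw [hf c h]
  calc #s * m ≤ ∑ a ∈ s, #(P a) := s.card_nsmul_le_sum _ _ hP
    _ = #(s.sigma P) := (card_sigma _ _).symm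
    _ ≤ #(t.sigma Q) := hsigma
    _ = ∑ b ∈ t, #(Q b) := card_sigma _ _
    _ ≤ #t * k := t.sum_le_card_nsmul _ _ hQ

/-- The 4-cycle `u v y x` along which a switching alternates between edges and non-edges. -/
def switchCycle (u v x y : V) : SimpleGraph V := edge u v ⊔ edge x y ⊔ edge u x ⊔ edge v y

/-- The switching of `G` at `u, v, x, y`, which for `Switchable G u v x y` replaces the edges
`uv, xy` by `ux, vy`. It is encoded as a symmetric difference, so that it is injective in `G`. -/
def switch (u v x y : V) (G : SimpleGraph V) : SimpleGraph V := G ∆ switchCycle u v x y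

/-- The edges `uv, xy` of `G` may be replaced by `ux, vy` without creating loops or multiple
edges. -/
structure Switchable (G : SimpleGraph V) (u v x y : V) : Prop where
  adj_uv : G.Adj u v
  adj_xy : G.Adj x y
  not_adj_ux : ¬ G.Adj u x
  not_adj_vy : ¬ G.Adj v y
  ne_ux : u ≠ x
  ne_vy : v ≠ y

theorem switch_injective (u v x y : V) : Function.Injective (switch u v x y) :=
  symmDiff_left_injective _

theorem switch_swap (u v x y : V) : switch u v x y = switch v u y x := by
  funext G
  simp only [switch, switchCycle, edge_comm u v, edge_comm x y, sup_right_comm]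

theorem switch_exchange (u v x y : V) : switch u v x y = switch x y u v := by
  funext G
  simp only [switch, switchCycle, edge_comm u x, edge_comm v y, sup_comm (edge u v)]

namespace Switchable

theorem swap (h : Switchable G u v x y) : Switchable G v u y x :=
  ⟨h.adj_uv.symm, h.adj_xy.symm, h.not_adj_vy, h.not_adj_ux, h.ne_vy, h.ne_ux⟩

theorem exchange (h : Switchable G u v x y) : Switchable G x y u v :=
  ⟨h.adj_xy, h.adj_uv, fun hxu ↦ h.not_adj_ux hxu.symm, fun hyv ↦ h.not_adj_vy hyv.symm,
    h.ne_ux.symm, h.ne_vy.symm⟩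

theorem switch_adj_iff (h : Switchable G u v x y) {a b : V} :
    (switch u v x y G).Adj a b ↔
      G.Adj a b ∧ s(a, b) ≠ s(u, v) ∧ s(a, b) ≠ s(x, y) ∨
        s(a, b) = s(u, x) ∨ s(a, b) = s(v, y) := by
  obtain ⟨huv, hxy, hux, hvy, hux', hvy'⟩ := h
  simp only [switch, switchCycle, symmDiff_def, sup_adj, sdiff_adj, edge_adj, Sym2.eq_iff, ne_eq]
  grind [G.adj_comm, huv.ne, hxy.ne]

variable [Fintype V]

theorem neighborFinset_switch_left (h : Switchable G u v x y) :
    (switch u v x y G).neighborFinset u = insert x ((G.neighborFinset u).erase v) := by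
  have huy : u ≠ y := by rintro rfl; exact h.not_adj_ux h.adj_xy.symm
  ext b
  simp only [mem_neighborFinset, h.switch_adj_iff, mem_insert, mem_erase, Sym2.eq_iff, ne_eq]
  grind [h.ne_ux, h.adj_uv.ne]

theorem degree_switch_left (h : Switchable G u v x y) :
    (switch u v x y G).degree u = G.degree u := by
  have hx : x ∉ (G.neighborFinset u).erase v := by simp [h.not_adj_ux]
  have hv : v ∈ G.neighborFinset u := by simpa using h.adj_uv
  rw [← card_neighborFinset_eq_degree, h.neighborFinset_switch_left, card_insert_of_notMem hx,
    card_erase_add_one hv, card_neighborFinset_eq_degree]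

theorem degree_switch (h : Switchable G u v x y) (w : V) :
    (switch u v x y G).degree w = G.degree w := by
  by_cases hw : w = u ∨ w = v ∨ w = x ∨ w = y
  · rcases hw with rfl | rfl | rfl | rfl
    · exact h.degree_switch_left
    · rw [switch_swap, h.swap.degree_switch_left]
    · rw [switch_exchange, h.exchange.degree_switch_left]
    · rw [switch_exchange, switch_swap, h.exchange.swap.degree_switch_left]
  · have hN : (switch u v x y G).neighborFinset w = G.neighborFinset w := by
      ext b
      simp only [mem_neighborFinset, h.switch_adj_iff, Sym2.eq_iff, ne_eq]
      grind
    rw [← card_neighborFinset_eq_degree, hN, card_neighborFinset_eq_degree]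

end Switchable

theorem disjoint_of_support_subset_of_isBipartiteWith {s t : Set V} (hH : H.support ⊆ s)
    (hF : F.IsBipartiteWith s t) : Disjoint H F := by
  rw [← disjoint_edgeSet, Set.disjoint_left]
  rintro ⟨a, b⟩ hHab hFab
  exact Set.disjoint_right.mp (isBipartiteWith_neighborSet_disjoint hF (hH hHab.left_mem_support))
    (hH hHab.right_mem_support) hFab

variable [Fintype V]

theorem card_interedges_univ_right (G : SimpleGraph V) (A : Finset V) :
    #(G.interedges A univ) = ∑ a ∈ A, G.degree a := by
  simp only [interedges_def, card_filter, sum_product, ← card_neighborFinset_eq_degree,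
    neighborFinset_eq_filter]

theorem card_mul_le_card_interedges_compl_add (hG : G.IsRegularOfDegree d) (A B : Finset V) :
    Fintype.card V * d ≤ #(G.interedges Aᶜ Bᶜ) + (#A + #B) * d := by
  have hcard (C : Finset V) : #(G.interedges C univ) = #C * d := by
    rw [card_interedges_univ_right, sum_const_nat fun a _ ↦ hG a]
  have hcover : G.interedges univ univ ⊆
      G.interedges Aᶜ Bᶜ ∪ (G.interedges A univ ∪ G.interedges univ B) := by
    intro e
    simp only [mem_union, mem_interedges_iff, mem_compl, mem_univ, true_and]
    tauto
  calc Fintype.card V * d = #(G.interedges univ univ) := (hcard univ).symm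
    _ ≤ #(G.interedges Aᶜ Bᶜ) + (#(G.interedges A univ) + #(G.interedges univ B)) :=
      (card_le_card hcover).trans <|
        (card_union_le _ _).trans <| Nat.add_le_add_left (card_union_le _ _) _
    _ = #(G.interedges Aᶜ Bᶜ) + (#A + #B) * d := by
      have := G.symm
      have hcomm : #(G.interedges univ B) = #(G.interedges B univ) := Rel.card_interedges_comm _ _
      rw [hcomm, hcard, hcard, add_mul]

theorem degree_sdiff_sup_add (hHG : H ≤ G) (hFG : F ≤ G) (hHF : Disjoint H F) (w : V) :
    (G \ (H ⊔ F)).degree w + H.degree w + F.degree w = G.degree w := by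
  have hsup : (H ⊔ F).degree w = H.degree w + F.degree w := by
    rw [← card_neighborFinset_eq_degree, neighborFinset_sup_of_disjoint w hHF, card_disjUnion]
    simp only [card_neighborFinset_eq_degree]
  have hsub : (H ⊔ F).neighborFinset w ⊆ G.neighborFinset w := 
    Set.toFinset_mono (neighborSet_mono (sup_le hHG hFG) w)
  rw [add_assoc, ← hsup, ← card_neighborFinset_eq_degree, neighborFinset_sdiff,
    ← card_neighborFinset_eq_degree, card_sdiff_add_card_eq_card hsub,
    card_neighborFinset_eq_degree]

/-- The pairs `(x, y)` of adjacent vertices outside `S` with which the edge `uv` of `G` is switched.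
They are written as the pairs avoiding two small vertex sets, which is how they are counted. -/
def switchPairs (S : Finset V) (u v : V) (G : SimpleGraph V) : Finset (V × V) :=
  G.interedges (S ∪ G.neighborFinset u)ᶜ (insert v (S ∪ G.neighborFinset v))ᶜ

theorem mem_switchPairs :
    (x, y) ∈ switchPairs S u v G ↔
      (x ∉ S ∧ ¬ G.Adj u x) ∧ (y ≠ v ∧ y ∉ S ∧ ¬ G.Adj v y) ∧ G.Adj x y := by
  simp [switchPairs, mk_mem_interedges_iff]

theorem switchable_of_mem_switchPairs (hu : u ∈ S) (huv : G.Adj u v)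
    (hxy : (x, y) ∈ switchPairs S u v G) : Switchable G u v x y := by
  obtain ⟨⟨hxS, hux⟩, ⟨hyv, -, hvy⟩, hadj⟩ := mem_switchPairs.mp hxy
  exact ⟨huv, hadj, hux, hvy, ne_of_mem_of_not_mem hu hxS, hyv.symm⟩

theorem le_card_switchPairs (hG : G.IsRegularOfDegree d) (hu : u ∈ S) (huv : G.Adj u v) :
    (Fintype.card V - 2 * (#S + d)) * d ≤ #(switchPairs S u v G) := by
  have hN (w : V) : #(G.neighborFinset w) = d := hG w
  have hA : #(S ∪ G.neighborFinset u) ≤ #S + d := hN u ▸ card_union_le _ _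
  -- `u` lies in both `S` and the neighbourhood of `v`, which makes up for the extra element `v`.
  have hB : #(insert v (S ∪ G.neighborFinset v)) ≤ #S + d := by
    have hinter : 0 < #(S ∩ G.neighborFinset v) :=
      card_pos.mpr ⟨u, by simpa [hu] using huv.symm⟩
    have hunion := card_union_add_card_inter S (G.neighborFinset v)
    have hinsert := card_insert_le v (S ∪ G.neighborFinset v)
    rw [hN] at hunion
    omega
  rw [Nat.sub_mul, Nat.sub_le_iff_le_add]
  calc Fintype.card V * d
      ≤ #(switchPairs S u v G) +
          (#(S ∪ G.neighborFinset u) + #(insert v (S ∪ G.neighborFinset v))) * d :=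
        card_mul_le_card_interedges_compl_add hG _ _
    _ ≤ #(switchPairs S u v G) + 2 * (#S + d) * d := by gcongr; omega

/-- The `d`-regular graphs `G` with `G[S] = H` and `F ⊆ G`. -/
def regularCompletions (d : ℕ) (S : Finset V) (H F : SimpleGraph V) : Finset (SimpleGraph V) :=
  {G | G.IsRegularOfDegree d ∧ (∀ a b, a ∈ S → b ∈ S → (G.Adj a b ↔ H.Adj a b)) ∧ F ≤ G}

theorem mem_regularCompletions :
    G ∈ regularCompletions d S H F ↔
      G.IsRegularOfDegree d ∧ (∀ a b, a ∈ S → b ∈ S → (G.Adj a b ↔ H.Adj a b)) ∧ F ≤ G := by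
  simp [regularCompletions]

theorem le_of_mem_regularCompletions (hH : H.support ⊆ S) (hG : G ∈ regularCompletions d S H F) :
    H ≤ G := fun a b hab ↦
  ((mem_regularCompletions.mp hG).2.1 a b (hH hab.left_mem_support)
    (hH hab.right_mem_support)).mpr hab

theorem degree_sdiff_sup_add_of_mem_regularCompletions (hH : H.support ⊆ S)
    (hF : F.IsBipartiteWith S Sᶜ) (hG : G ∈ regularCompletions d S H F) (w : V) :
    (G \ (H ⊔ F)).degree w + H.degree w + F.degree w = d := by
  obtain ⟨hreg, -, hFG⟩ := mem_regularCompletions.mp hG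
  rw [degree_sdiff_sup_add (le_of_mem_regularCompletions hH hG) hFG
    (disjoint_of_support_subset_of_isBipartiteWith hH hF), hreg w]

theorem switch_mem_regularCompletions (hF : F.IsBipartiteWith S Sᶜ) (hu : u ∈ S) (hv : v ∉ S)
    (huvF : ¬ F.Adj u v) (hG : G ∈ regularCompletions d S H F) (huv : G.Adj u v)
    (hxy : (x, y) ∈ switchPairs S u v G) : switch u v x y G ∈ regularCompletions d S H F := by
  have hsw := switchable_of_mem_switchPairs hu huv hxy
  obtain ⟨⟨hxS, -⟩, ⟨-, hyS, -⟩, -⟩ := mem_switchPairs.mp hxy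
  obtain ⟨hreg, hind, hFG⟩ := mem_regularCompletions.mp hG
  refine mem_regularCompletions.mpr
    ⟨fun w ↦ (hsw.degree_switch w).trans (hreg w), fun a b ha hb ↦ ?_, fun a b hab ↦ ?_⟩
  · rw [← hind a b ha hb, hsw.switch_adj_iff]
    simp only [Sym2.eq_iff, ne_eq]
    grind
  · have hxyF : ¬ F.Adj x y := fun h ↦ hxS (hF.mem_of_mem_adj' (by simpa using hyS) h)
    refine hsw.switch_adj_iff.mpr (.inl ⟨hFG hab, fun h ↦ huvF ?_, fun h ↦ hxyF ?_⟩)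
    all_goals exact (F.adj_congr_of_sym2 h).mp hab

theorem mem_neighborFinset_product_of_mem_switchPairs (hH : H.support ⊆ S) (hFG : F ≤ G)
    (hu : u ∈ S) (huv : G.Adj u v) (hxy : (x, y) ∈ switchPairs S u v G) :
    (x, y) ∈ (switch u v x y G \ (H ⊔ F)).neighborFinset u ×ˢ
      (switch u v x y G).neighborFinset v := by
  have hsw := switchable_of_mem_switchPairs hu huv hxy
  have hxS : x ∉ S := (mem_switchPairs.mp hxy).1.1
  have hHux : ¬ H.Adj u x := fun h ↦ hxS (hH h.right_mem_support)
  have hFux : ¬ F.Adj u x := fun h ↦ hsw.not_adj_ux (hFG h)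
  simp [hsw.switch_adj_iff, hHux, hFux]

/-- The degree difference is truncated only if `regularCompletions d S H F` is empty. -/
theorem card_regularCompletions_adj_mul_le (hH : H.support ⊆ S) (hF : F.IsBipartiteWith S Sᶜ)
    (hu : u ∈ S) (hv : v ∉ S) (huvF : ¬ F.Adj u v) :
    #{G ∈ regularCompletions d S H F | G.Adj u v} * (Fintype.card V - 2 * (#S + d)) ≤
      #(regularCompletions d S H F) * (d - H.degree u - F.degree u) := by
  obtain hempty | hnonempty := {G ∈ regularCompletions d S H F | G.Adj u v}.eq_empty_or_nonempty
  · simp [hempty]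
  have hd : 0 < d := by
    obtain ⟨G, hG⟩ := hnonempty
    rw [mem_filter, mem_regularCompletions] at hG
    exact hG.1.1 u ▸ hG.2.degree_pos_left
  refine Nat.le_of_mul_le_mul_right ?_ hd
  rw [mul_assoc, mul_assoc]
  refine card_mul_le_card_mul_of_injective
    (P := switchPairs S u v)
    (Q := fun G ↦ (G \ (H ⊔ F)).neighborFinset u ×ˢ G.neighborFinset v)
    (fun p ↦ switch u v p.1 p.2) (fun p ↦ switch_injective u v p.1 p.2) ?_ ?_ ?_
  · rintro G hG ⟨x, y⟩ hxy
    obtain ⟨hG, huv⟩ := mem_filter.mp hG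
    exact ⟨switch_mem_regularCompletions hF hu hv huvF hG huv hxy,
      mem_neighborFinset_product_of_mem_switchPairs hH (mem_regularCompletions.mp hG).2.2 hu huv
        hxy⟩
  · intro G hG
    obtain ⟨hG, huv⟩ := mem_filter.mp hG
    exact le_card_switchPairs (mem_regularCompletions.mp hG).1 hu huv
  · intro G hG
    have hdeg := degree_sdiff_sup_add_of_mem_regularCompletions hH hF hG u
    rw [card_product, card_neighborFinset_eq_degree, card_neighborFinset_eq_degree,
      (mem_regularCompletions.mp hG).1 v]
    gcongr
    omega

theorem statement_5_general (hS : 12 * (#S + d) ≤ 5 * Fintype.card V) (hH : H.support ⊆ S)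
    (hF : F.IsBipartiteWith S Sᶜ) (hu : u ∈ S) (hv : v ∉ S) (huvF : ¬ F.Adj u v) :
    (#{G ∈ regularCompletions d S H F | G.Adj u v} : ℝ) ≤
      6 * ((d : ℝ) - H.degree u - F.degree u) / Fintype.card V *
        #(regularCompletions d S H F) := by
  obtain hempty | ⟨G, hG⟩ := (regularCompletions d S H F).eq_empty_or_nonempty
  · simp [hempty]
  have hn : 0 < Fintype.card V := Fintype.card_pos_iff.mpr ⟨u⟩
  have hdeg : (G \ (H ⊔ F)).degree u + H.degree u + F.degree u = d :=
    degree_sdiff_sup_add_of_mem_regularCompletions hH hF hG u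
  have hcount : #{G ∈ regularCompletions d S H F | G.Adj u v} * Fintype.card V ≤
      6 * (d - H.degree u - F.degree u) * #(regularCompletions d S H F) := by
    calc #{G ∈ regularCompletions d S H F | G.Adj u v} * Fintype.card V
        ≤ #{G ∈ regularCompletions d S H F | G.Adj u v} *
            (6 * (Fintype.card V - 2 * (#S + d))) := by gcongr; omega
      _ ≤ 6 * (d - H.degree u - F.degree u) * #(regularCompletions d S H F) := by
        linarith [card_regularCompletions_adj_mul_le (d := d) hH hF hu hv huvF]
  rw [div_mul_eq_mul_div, le_div_iff₀ (by exact_mod_cast hn),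
    ← Nat.cast_sub (by omega), ← Nat.cast_sub (by omega)]
  exact_mod_cast hcount

end Switching

/-- **Lemma 3.1.** Switching bound on the conditional probability of an edge. Stated in
counting form: among simple `d`-regular graphs `G` on `n` vertices with `G[S] = H` and
`F ⊆ G`, the proportion containing the edge `uv` is at most `6(d - d_H(u) - d_F(u))/n`. -/
theorem statement_5 (n d : ℕ) (hd : 3 ≤ d) (hdn : 4 * d ≤ n)
    (S : Finset (Fin n)) (hS : 6 * S.card ≤ n)
    (H : SimpleGraph (Fin n)) (hH : ∀ a b : Fin n, H.Adj a b → a ∈ S ∧ b ∈ S)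
    (F : SimpleGraph (Fin n))
    (hF : ∀ a b : Fin n, F.Adj a b → (a ∈ S ∧ b ∉ S) ∨ (a ∉ S ∧ b ∈ S))
    (hΔ : ∀ w : Fin n, (F ⊔ H).degree w ≤ d)
    (u v : Fin n) (hu : u ∈ S) (hv : v ∉ S) (huv : ¬ F.Adj u v) :
    ((Finset.univ.filter (fun G : SimpleGraph (Fin n) =>
        (∀ w, G.degree w = d) ∧
        (∀ a b : Fin n, a ∈ S → b ∈ S → (G.Adj a b ↔ H.Adj a b)) ∧
        F ≤ G ∧ G.Adj u v)).card : ℝ)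
      ≤ 6 * ((d : ℝ) - (H.degree u : ℝ) - (F.degree u : ℝ)) / (n : ℝ) *
        ((Finset.univ.filter (fun G : SimpleGraph (Fin n) =>
          (∀ w, G.degree w = d) ∧
          (∀ a b : Fin n, a ∈ S → b ∈ S → (G.Adj a b ↔ H.Adj a b)) ∧
          F ≤ G)).card : ℝ) := by
  have hgeneral := statement_5_general (d := d) (S := S) (H := H) (F := F) (u := u) (v := v)
    (by rw [Fintype.card_fin]; omega) (fun a ⟨b, hab⟩ ↦ (hH a b hab).1)
    ⟨disjoint_compl_right, fun a b hab ↦ by simpa using hF a b hab⟩ hu hv huv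
  simp only [regularCompletions, Finset.filter_filter, and_assoc, Fintype.card_fin] at hgeneral
  convert hgeneral <;> rfl
end
end

section
/- Suppose μ ≥ 0 and d, n ∈ ℕ with 3 ≤ d ≤ n−1 and n sufficiently large. Consider the exploration process on a uniformly random input (G_{n,d}, 𝔖_{n,d}) with percolation probability p = (1 − μ n^{−1/3})/(d−1). For each t, let A_t ⊆ S_t be the set of vertices that were added to the explored set at a time when every edge incident to the explored set had already been exposed (i.e. the vertices that start a new component of the percolated graph), let a_t = |A_t| and c_t = |S_t ∖ A_t|. Then for every 0 ≤ t ≤ 5 d n^{2/3}, on the event that c_s ≤ 8 n^{2/3} for all s ≤ t, we have a_t ≤ ⌈t/(5d/6)⌉. -/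
open scoped Classical BigOperators

noncomputable section

/-- The set of all simple `d`-regular graphs on the vertex set `Fin n`. -/
def regularGraphs (n d : ℕ) : Finset (SimpleGraph (Fin n)) :=
  Finset.univ.filter (fun G => ∀ v, G.degree v = d)

/-- The probability of the percolation configuration `ω`, where each potential edge is
retained independently with probability `p`. -/
def percWeight {n : ℕ} (p : ℝ) (ω : Sym2 (Fin n) → Bool) : ℝ :=
  p ^ (Finset.univ.filter (fun e : Sym2 (Fin n) => ω e = true)).card *
    (1 - p) ^ (Finset.univ.filter (fun e : Sym2 (Fin n) => ω e = false)).card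

/-- The state of the exploration process: the explored set `S_t`, the set `F_t` of exposed
edges that failed to percolate, the set `A_t` of vertices that started a new component,
and the values `Y_t` and `Z_t`. -/
abbrev ExpState (n : ℕ) :=
  Finset (Fin n) × Finset (Sym2 (Fin n)) × Finset (Fin n) × ℕ × ℕ

/-- `d_F(u)`: the number of edges of the edge set `F` containing `u`. -/
def degF {n : ℕ} (F : Finset (Sym2 (Fin n))) (u : Fin n) : ℕ :=
  (F.filter (fun e => u ∈ e)).card

/-- `d_{G,S}(u)`: the number of neighbours of `u` in `G` that belong to `S`. -/
def degS {n : ℕ} (G : SimpleGraph (Fin n)) (S : Finset (Fin n)) (u : Fin n) : ℕ :=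
  (G.neighborFinset u ∩ S).card

/-- A single step of the exploration process on the input `(G, σ)` with semi-edge
labelling `L` and percolation configuration `ω`. -/
def expStep {n d : ℕ} (G : SimpleGraph (Fin n)) (L : Fin n → Fin n → Fin d)
    (σ : Fin n → Equiv.Perm (Fin d)) (ω : Sym2 (Fin n) → Bool)
    (st : ExpState n) : ExpState n :=
  let S := st.1
  let F := st.2.1
  let A := st.2.2.1
  let U := S.filter (fun u => degS G S u + degF F u < d)
  if hU : U.Nonempty then
    -- `v_{t+1}` is the first unfinished vertex of `S_t` in the linear order
    let v := U.min' hU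
    -- candidates for `w_{t+1}` : vertices `w ∉ S_t` with `vw ∈ E(G) ∖ E(F_t)`
    let W := (Finset.univ \ S).filter (fun w => G.Adj v w ∧ s(v, w) ∉ F)
    -- `w_{t+1}` minimises `σ_v (ℓ(w))`
    let W' := W.filter (fun w => ∀ w' ∈ W, σ v (L v w) ≤ σ v (L v w'))
    if hW : W'.Nonempty then
      let w := W'.min' hW
      if ω s(v, w) then
        (insert w S, F.filter (fun e => w ∉ e), A, degF F w, degS G S w - degF F w - 1)
      else
        (S, insert s(v, w) F, A, 0, 0)
    else (S, F, A, 0, 0)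
  else
    -- start a new component at a vertex `w ∉ S_t` minimising `d_{F_t}`
    let C := Finset.univ \ S
    let C' := C.filter (fun w => ∀ w' ∈ C, degF F w ≤ degF F w')
    if hC : C'.Nonempty then
      let w := C'.min' hC
      (insert w S, F.filter (fun e => w ∉ e), insert w A, degF F w, 0)
    else (S, F, A, 0, 0)

/-- The trajectory of the exploration process; `expTraj G L σ ω t` is the state after
`t` steps. -/
def expTraj {n d : ℕ} (G : SimpleGraph (Fin n)) (L : Fin n → Fin n → Fin d)
    (σ : Fin n → Equiv.Perm (Fin d)) (ω : Sym2 (Fin n) → Bool) : ℕ → ExpState n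
  | 0 => (∅, ∅, ∅, 0, 0)
  | t + 1 => expStep G L σ ω (expTraj G L σ ω t)

/-- `S_t`, the set of explored vertices at time `t`. -/
def expS {n d : ℕ} (G : SimpleGraph (Fin n)) (L : Fin n → Fin n → Fin d)
    (σ : Fin n → Equiv.Perm (Fin d)) (ω : Sym2 (Fin n) → Bool) (t : ℕ) : Finset (Fin n) :=
  (expTraj G L σ ω t).1

/-- `F_t`, the set of exposed edges that failed to percolate at time `t`. -/
def expF {n d : ℕ} (G : SimpleGraph (Fin n)) (L : Fin n → Fin n → Fin d)
    (σ : Fin n → Equiv.Perm (Fin d)) (ω : Sym2 (Fin n) → Bool) (t : ℕ) :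
    Finset (Sym2 (Fin n)) :=
  (expTraj G L σ ω t).2.1

/-- `A_t`, the set of explored vertices that started a new component. -/
def expA {n d : ℕ} (G : SimpleGraph (Fin n)) (L : Fin n → Fin n → Fin d)
    (σ : Fin n → Equiv.Perm (Fin d)) (ω : Sym2 (Fin n) → Bool) (t : ℕ) : Finset (Fin n) :=
  (expTraj G L σ ω t).2.2.1

/-- `Y_t`. -/
def expY {n d : ℕ} (G : SimpleGraph (Fin n)) (L : Fin n → Fin n → Fin d)
    (σ : Fin n → Equiv.Perm (Fin d)) (ω : Sym2 (Fin n) → Bool) (t : ℕ) : ℕ :=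
  (expTraj G L σ ω t).2.2.2.1

/-- `Z_t`. -/
def expZ {n d : ℕ} (G : SimpleGraph (Fin n)) (L : Fin n → Fin n → Fin d)
    (σ : Fin n → Equiv.Perm (Fin d)) (ω : Sym2 (Fin n) → Bool) (t : ℕ) : ℕ :=
  (expTraj G L σ ω t).2.2.2.2

/-- `X_t = Σ_{u ∈ S_t} (d - d_{H_t}(u) - d_{F_t}(u))`, the number of unexposed edges
between `S_t` and its complement. -/
def expX {n d : ℕ} (G : SimpleGraph (Fin n)) (L : Fin n → Fin n → Fin d)
    (σ : Fin n → Equiv.Perm (Fin d)) (ω : Sym2 (Fin n) → Bool) (t : ℕ) : ℕ :=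
  ∑ u ∈ expS G L σ ω t,
    (d - degS G (expS G L σ ω t) u - degF (expF G L σ ω t) u)

/-- The vertex `w_{t+1}` that the exploration process selects from the state `st`
(if any); this choice does not depend on the percolation configuration. -/
def expChosen {n d : ℕ} (G : SimpleGraph (Fin n)) (L : Fin n → Fin n → Fin d)
    (σ : Fin n → Equiv.Perm (Fin d)) (st : ExpState n) : Option (Fin n) :=
  let S := st.1
  let F := st.2.1
  let U := S.filter (fun u => degS G S u + degF F u < d)
  if hU : U.Nonempty then
    let v := U.min' hU
    let W := (Finset.univ \ S).filter (fun w => G.Adj v w ∧ s(v, w) ∉ F)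
    let W' := W.filter (fun w => ∀ w' ∈ W, σ v (L v w) ≤ σ v (L v w'))
    if hW : W'.Nonempty then some (W'.min' hW) else none
  else
    let C := Finset.univ \ S
    let C' := C.filter (fun w => ∀ w' ∈ C, degF F w ≤ degF F w')
    if hC : C'.Nonempty then some (C'.min' hC) else none

/-- The edges of `G` with both endpoints in `S` (the edge set of `H = G[S]`). -/
def innerEdges {n : ℕ} (G : SimpleGraph (Fin n)) (S : Finset (Fin n)) :
    Finset (Sym2 (Fin n)) :=
  G.edgeFinset.filter (fun e => ∀ x ∈ e, x ∈ S)

/-- The history `ℋ_t` of the exploration process: everything revealed up to time `t`,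
namely the states `(S_s, F_s, A_s, Y_s, Z_s)` together with the graphs `H_s = G[S_s]`
for all `s ≤ t` (constant junk value beyond time `t`). -/
def expHist {n d : ℕ} (G : SimpleGraph (Fin n)) (L : Fin n → Fin n → Fin d)
    (σ : Fin n → Equiv.Perm (Fin d)) (ω : Sym2 (Fin n) → Bool) (t : ℕ) :
    ℕ → ExpState n × Finset (Sym2 (Fin n)) :=
  fun s => if s ≤ t then
      (expTraj G L σ ω s, innerEdges G (expTraj G L σ ω s).1)
    else ((∅, ∅, ∅, 0, 0), ∅)

/-- `X_t` read off from a history: `Σ_{u ∈ S_t} (d - d_{H_t}(u) - d_{F_t}(u))`, where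
`d_{H_t}(u)` is computed from the revealed edge set of `H_t`. -/
def histX {n : ℕ} (d : ℕ) (hs : ExpState n × Finset (Sym2 (Fin n))) : ℕ :=
  ∑ u ∈ hs.1.1, (d - degF hs.2 u - degF hs.1.2.1 u)

/-- The expectation of `f` over a uniformly random input `(G_{n,d}, 𝔖_{n,d})` (the
labelling permutations `σ` being uniform and independent) together with an independent
percolation configuration in which each potential edge is retained independently with
probability `p`. -/
def expExpec (n d : ℕ) (p : ℝ)
    (f : SimpleGraph (Fin n) → (Fin n → Equiv.Perm (Fin d)) → (Sym2 (Fin n) → Bool) → ℝ) :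
    ℝ :=
  (((regularGraphs n d).card : ℝ) * (Fintype.card (Fin n → Equiv.Perm (Fin d)) : ℝ))⁻¹ *
    ∑ G ∈ regularGraphs n d, ∑ σ : Fin n → Equiv.Perm (Fin d), ∑ ω : Sym2 (Fin n) → Bool,
      percWeight p ω * f G σ ω

/-- The probability of an event for the exploration process on a uniformly random input
with independent percolation. -/
def expProb (n d : ℕ) (p : ℝ)
    (E : SimpleGraph (Fin n) → (Fin n → Equiv.Perm (Fin d)) → (Sym2 (Fin n) → Bool) → Prop) :
    ℝ :=
  expExpec n d p (fun G σ ω => if E G σ ω then 1 else 0)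

/-- A valid family of semi-edge labellings: for each graph `G` and each vertex `v`, the
labels of the semi-edges at `v` (i.e. the labels `L G v w` for neighbours `w` of `v`)
are pairwise distinct. -/
def GoodLabelling (n d : ℕ) (L : SimpleGraph (Fin n) → Fin n → Fin n → Fin d) : Prop :=
  ∀ G : SimpleGraph (Fin n), ∀ v : Fin n, Set.InjOn (L G v) (G.neighborSet v)

/-!
Call a vertex that starts a new component a root. When a root `w` is picked from `S_tᶜ`, every edge
from `S_t` to `w` is already exposed and hence lies in `F_t`, and `w` minimises `d_{F_t}` over
`S_tᶜ`. Each of the at most `t ≤ 5dn^{2/3}` edges of `F_t` has exactly one endpoint outside `S_t`,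
and `|S_tᶜ| ≥ 30n^{2/3}`, so averaging gives `d_{F_t}(w) ≤ d/6`. Hence at least `5d/6` edges at `w`
are still unexposed; a step exposes at most one of them, so at least `5d/6` steps pass before the
next root.

The lower bound on `|S_tᶜ|` comes from `a_t ≤ 6n^{2/3} + 1` and `c_t ≤ 8n^{2/3}`, which leave at
least `n - 15n^{2/3} ≥ 30n^{2/3}` vertices once `n ≥ 45³`. As it relies on the bound for `a_t`, the
two are proved together by induction on `t`.
-/

section ExposedDegree

variable {n : ℕ}

lemma degS_insert_le (G : SimpleGraph (Fin n)) (S : Finset (Fin n)) (w u : Fin n) :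
    degS G (insert w S) u ≤ degS G S u + 1 := by
  unfold degS
  by_cases hw : w ∈ G.neighborFinset u
  · rw [Finset.inter_insert_of_mem hw]
    exact Finset.card_insert_le _ _
  · rw [Finset.inter_insert_of_notMem hw]
    exact Nat.le_succ _

lemma degS_insert_self (G : SimpleGraph (Fin n)) (S : Finset (Fin n)) (w : Fin n) :
    degS G (insert w S) w = degS G S w := by
  unfold degS
  rw [Finset.inter_insert_of_notMem (G.notMem_neighborFinset_self w)]

lemma degF_mono {F F' : Finset (Sym2 (Fin n))} (hF : F ⊆ F') (u : Fin n) :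
    degF F u ≤ degF F' u :=
  Finset.card_le_card (Finset.filter_subset_filter _ hF)

lemma degF_insert_le (F : Finset (Sym2 (Fin n))) (e : Sym2 (Fin n)) (u : Fin n) :
    degF (insert e F) u ≤ degF F u + 1 := by
  unfold degF
  rw [Finset.filter_insert]
  split_ifs
  · exact Finset.card_insert_le _ _
  · exact Nat.le_succ _

lemma degF_filter_notMem_self (F : Finset (Sym2 (Fin n))) (w : Fin n) :
    degF (F.filter (fun e => w ∉ e)) w = 0 := by
  unfold degF
  rw [Finset.card_eq_zero, Finset.filter_filter, Finset.filter_eq_empty_iff]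
  exact fun e _ he => he.1 he.2

/-- The number `d_H(u) + d_F(u)` of exposed edges at an explored vertex `u`, where `H = G[S]`. -/
def exposedDeg (G : SimpleGraph (Fin n)) (S : Finset (Fin n)) (F : Finset (Sym2 (Fin n)))
    (u : Fin n) : ℕ :=
  degS G S u + degF F u

lemma exposedDeg_insert_filter_le (G : SimpleGraph (Fin n)) (S : Finset (Fin n))
    (F : Finset (Sym2 (Fin n))) (w u : Fin n) :
    exposedDeg G (insert w S) (F.filter (fun e => w ∉ e)) u ≤ exposedDeg G S F u + 1 := by
  have hS := degS_insert_le G S w u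
  have hF := degF_mono (F.filter_subset (fun e => w ∉ e)) u
  unfold exposedDeg
  omega

lemma exposedDeg_insert_edge_le (G : SimpleGraph (Fin n)) (S : Finset (Fin n))
    (F : Finset (Sym2 (Fin n))) (e : Sym2 (Fin n)) (u : Fin n) :
    exposedDeg G S (insert e F) u ≤ exposedDeg G S F u + 1 :=
  Nat.add_le_add_left (degF_insert_le F e u) _

lemma exposedDeg_insert_filter_self (G : SimpleGraph (Fin n)) (S : Finset (Fin n))
    (F : Finset (Sym2 (Fin n))) (w : Fin n) :
    exposedDeg G (insert w S) (F.filter (fun e => w ∉ e)) w = degS G S w := by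
  rw [exposedDeg, degS_insert_self, degF_filter_notMem_self, add_zero]

end ExposedDegree

section Crossing

variable {n d : ℕ} {G : SimpleGraph (Fin n)} {S : Finset (Fin n)} {F : Finset (Sym2 (Fin n))}

/-- `F` consists of edges of `G` between `S` and its complement, i.e. `F` is the edge set of a
bipartite subgraph of `G` with parts `S` and `V ∖ S`. -/
def IsCrossing (G : SimpleGraph (Fin n)) (S : Finset (Fin n)) (F : Finset (Sym2 (Fin n))) : Prop :=
  ∀ e ∈ F, ∃ v ∈ S, ∃ w ∉ S, G.Adj v w ∧ s(v, w) = e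

namespace IsCrossing

lemma insert_edge (hF : IsCrossing G S F) {v w : Fin n} (hv : v ∈ S) (hw : w ∉ S)
    (hvw : G.Adj v w) : IsCrossing G S (insert s(v, w) F) := by
  intro e he
  rcases Finset.mem_insert.1 he with rfl | he
  · exact ⟨v, hv, w, hw, hvw, rfl⟩
  · exact hF e he

lemma insert_vertex (hF : IsCrossing G S F) (w : Fin n) :
    IsCrossing G (insert w S) (F.filter (fun e => w ∉ e)) := by
  intro e he
  obtain ⟨heF, hwe⟩ := Finset.mem_filter.1 he
  obtain ⟨a, ha, b, hb, hab, rfl⟩ := hF e heF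
  have hbw : b ≠ w := fun h => hwe (h ▸ Sym2.mem_mk_right a b)
  exact ⟨a, Finset.mem_insert_of_mem ha, b, by simp [hbw, hb], hab, rfl⟩

lemma filter_mem_subset (hF : IsCrossing G S F) {u : Fin n} (hu : u ∈ S) :
    F.filter (fun e => u ∈ e) ⊆ (G.neighborFinset u \ S).image (fun w => s(u, w)) := by
  intro e he
  obtain ⟨heF, hue⟩ := Finset.mem_filter.1 he
  obtain ⟨a, -, b, hb, hab, rfl⟩ := hF e heF
  have hub : u ≠ b := fun h => hb (h ▸ hu)
  obtain rfl : u = a := (Sym2.mem_iff.1 hue).resolve_right hub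
  exact Finset.mem_image.2 ⟨b, by simp [hab, hb], rfl⟩

lemma mem_of_degree_le_exposedDeg (hF : IsCrossing G S F) {u w : Fin n} (hu : u ∈ S) (hw : w ∉ S)
    (huw : G.Adj u w) (hdeg : G.degree u ≤ exposedDeg G S F u) : s(u, w) ∈ F := by
  have hcard : ((G.neighborFinset u \ S).image (fun w => s(u, w))).card ≤
      (F.filter (fun e => u ∈ e)).card := by
    have himage := Finset.card_image_le (s := G.neighborFinset u \ S) (f := fun w => s(u, w))
    have hsplit := Finset.card_inter_add_card_sdiff (G.neighborFinset u) S
    rw [G.card_neighborFinset_eq_degree] at hsplit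
    unfold exposedDeg degS degF at hdeg
    omega
  have heq := Finset.eq_of_subset_of_card_le (hF.filter_mem_subset hu) hcard
  have hmem : s(u, w) ∈ (G.neighborFinset u \ S).image (fun w => s(u, w)) :=
    Finset.mem_image_of_mem _ (by simp [huw, hw])
  rw [← heq] at hmem
  exact Finset.mem_of_mem_filter _ hmem

lemma degS_le_degF (hF : IsCrossing G S F) (hS : ∀ u ∈ S, G.degree u ≤ exposedDeg G S F u)
    {w : Fin n} (hw : w ∉ S) : degS G S w ≤ degF F w := by
  refine Finset.card_le_card_of_injOn (fun u => s(u, w)) ?_ fun _ _ _ _ => Sym2.congr_left.1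
  intro u hu
  obtain ⟨hwu, huS⟩ := Finset.mem_inter.1 hu
  have huw : G.Adj u w := ((G.mem_neighborFinset w u).1 hwu).symm
  exact Finset.mem_filter.2
    ⟨hF.mem_of_degree_le_exposedDeg huS hw huw (hS u huS), Sym2.mem_mk_right u w⟩

lemma sum_compl_degF_le (hF : IsCrossing G S F) : ∑ w ∈ Sᶜ, degF F w ≤ F.card := by
  have card_outer_le_one : ∀ e ∈ F, (Sᶜ.filter (fun x => x ∈ e)).card ≤ 1 := by
    intro e he
    obtain ⟨a, ha, b, -, -, rfl⟩ := hF e he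
    have eq_outer : ∀ x ∈ Sᶜ.filter (fun x => x ∈ s(a, b)), x = b := by
      intro x hx
      obtain ⟨hxS, hxe⟩ := Finset.mem_filter.1 hx
      have hxa : x ≠ a := fun h => Finset.mem_compl.1 hxS (h ▸ ha)
      exact (Sym2.mem_iff.1 hxe).resolve_left hxa
    exact Finset.card_le_one.2 fun x hx y hy => (eq_outer x hx).trans (eq_outer y hy).symm
  calc ∑ w ∈ Sᶜ, degF F w = ∑ e ∈ F, (Sᶜ.filter (fun x => x ∈ e)).card :=
        Finset.sum_card_bipartiteAbove_eq_sum_card_bipartiteBelow _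
    _ ≤ ∑ _e ∈ F, 1 := Finset.sum_le_sum card_outer_le_one
    _ = F.card := (Finset.card_eq_sum_ones F).symm

lemma mul_degF_le_of_forall_le {k : ℕ} (hF : IsCrossing G S F)
    (hcard : k * F.card ≤ d * Sᶜ.card) {w : Fin n} (hw : w ∉ S)
    (hmin : ∀ x ∉ S, degF F w ≤ degF F x) : k * degF F w ≤ d := by
  have hpos : 0 < Sᶜ.card := Finset.card_pos.2 ⟨w, Finset.mem_compl.2 hw⟩
  have havg : Sᶜ.card * degF F w ≤ F.card :=
    (Finset.card_nsmul_le_sum _ _ _ fun x hx => hmin x (Finset.mem_compl.1 hx)).trans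
      hF.sum_compl_degF_le
  refine Nat.le_of_mul_le_mul_right ?_ hpos
  calc k * degF F w * Sᶜ.card = k * (Sᶜ.card * degF F w) := by ring
    _ ≤ k * F.card := Nat.mul_le_mul_left k havg
    _ ≤ d * Sᶜ.card := hcard

end IsCrossing

end Crossing

section Transition

variable {n d t : ℕ} {G : SimpleGraph (Fin n)} {st st' : ExpState n}

/-- The possible effects of one exploration step on `(S, F, A)`, forgetting how the exposed edge is
selected and what decides whether it percolates. The case `idle` covers
the fallback branches of `expStep` in which no vertex is available. -/
inductive ExpTransition (d : ℕ) (G : SimpleGraph (Fin n)) : ExpState n → ExpState n → Prop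
  | percolate {S F A y z y' z'} (w : Fin n) :
      ExpTransition d G (S, F, A, y, z) (insert w S, F.filter (fun e => w ∉ e), A, y', z')
  | fail {S F A y z y' z'} {v w : Fin n} (hv : v ∈ S) (hw : w ∉ S) (hvw : G.Adj v w) :
      ExpTransition d G (S, F, A, y, z) (S, insert s(v, w) F, A, y', z')
  | newRoot {S F A y z y' z'} {w : Fin n} (hS : ∀ u ∈ S, d ≤ exposedDeg G S F u) (hw : w ∉ S)
      (hmin : ∀ x ∉ S, degF F w ≤ degF F x) :
      ExpTransition d G (S, F, A, y, z)
        (insert w S, F.filter (fun e => w ∉ e), insert w A, y', z')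
  | idle {S F A y z y' z'} : ExpTransition d G (S, F, A, y, z) (S, F, A, y', z')

lemma expTransition_expStep (G : SimpleGraph (Fin n)) (L : Fin n → Fin n → Fin d)
    (σ : Fin n → Equiv.Perm (Fin d)) (ω : Sym2 (Fin n) → Bool) (st : ExpState n) :
    ExpTransition d G st (expStep G L σ ω st) := by
  obtain ⟨S, F, A, y, z⟩ := st
  simp only [expStep]
  split_ifs with hU hW _ hC
  · exact .percolate _
  · have hv := Finset.mem_of_mem_filter _ (Finset.min'_mem _ hU)
    obtain ⟨hwS, hvw, -⟩ := Finset.mem_filter.1 (Finset.mem_of_mem_filter _ (Finset.min'_mem _ hW))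
    exact .fail hv (Finset.mem_sdiff.1 hwS).2 hvw
  · exact .idle
  · obtain ⟨hwS, hmin⟩ := Finset.mem_filter.1 (Finset.min'_mem _ hC)
    refine .newRoot (fun u hu => ?_) (Finset.mem_sdiff.1 hwS).2 fun x hx => hmin x (by simpa)
    by_contra! hlt
    exact hU ⟨u, Finset.mem_filter.2 ⟨hu, hlt⟩⟩
  · exact .idle

/-- Invariant of the charging argument, with `A` the set of roots: each root costs `5d` and each
step pays `6`. The first `t` steps, together with one step for each unexposed edge at a suitable
explored vertex `r` (the latest root), pay for all roots. The term `6d - 6·exposedDeg r` is moved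
across the inequality to avoid subtraction in `ℕ`. -/
def RootsCharged (d : ℕ) (G : SimpleGraph (Fin n)) (st : ExpState n) (t : ℕ) : Prop :=
  st.2.2.1.Nonempty → ∃ r ∈ st.1,
    5 * d * st.2.2.1.card + 6 * exposedDeg G st.1 st.2.1 r ≤ 6 * (t + d)

lemma RootsCharged.mul_card_le (h : RootsCharged d G st t)
    (hS : ∀ u ∈ st.1, d ≤ exposedDeg G st.1 st.2.1 u) : 5 * d * st.2.2.1.card ≤ 6 * t := by
  rcases st.2.2.1.eq_empty_or_nonempty with hA | hA
  · simp [hA]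
  · obtain ⟨r, hr, hle⟩ := h hA
    have := hS r hr
    omega

namespace ExpTransition

lemma explored_subset (h : ExpTransition d G st st') : st.1 ⊆ st'.1 := by
  cases h
  case percolate | newRoot => exact Finset.subset_insert _ _
  case fail | idle => exact subset_rfl

lemma roots_subset_explored (h : ExpTransition d G st st') (hA : st.2.2.1 ⊆ st.1) :
    st'.2.2.1 ⊆ st'.1 := by
  cases h
  case percolate => exact hA.trans (Finset.subset_insert _ _)
  case newRoot => exact Finset.insert_subset_insert _ hA
  case fail | idle => exact hA

lemma isCrossing (h : ExpTransition d G st st') (hF : IsCrossing G st.1 st.2.1) :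
    IsCrossing G st'.1 st'.2.1 := by
  cases h
  case percolate | newRoot => exact hF.insert_vertex _
  case fail hv hw hvw => exact hF.insert_edge hv hw hvw
  case idle => exact hF

lemma card_failed_le (h : ExpTransition d G st st') : st'.2.1.card ≤ st.2.1.card + 1 := by
  cases h
  case percolate | newRoot => exact (Finset.card_filter_le _ _).trans (Nat.le_succ _)
  case fail => exact Finset.card_insert_le _ _
  case idle => exact Nat.le_succ _

lemma exposedDeg_le (h : ExpTransition d G st st') (u : Fin n) :
    exposedDeg G st'.1 st'.2.1 u ≤ exposedDeg G st.1 st.2.1 u + 1 := by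
  cases h
  case percolate | newRoot => exact exposedDeg_insert_filter_le _ _ _ _ _
  case fail => exact exposedDeg_insert_edge_le _ _ _ _ _
  case idle => exact Nat.le_succ _

lemma roots_eq_or_saturated (h : ExpTransition d G st st') :
    st'.2.2.1 = st.2.2.1 ∨ (∀ u ∈ st.1, d ≤ exposedDeg G st.1 st.2.1 u) ∧
      st'.2.2.1.card ≤ st.2.2.1.card + 1 := by
  cases h
  case percolate | fail | idle => exact .inl rfl
  case newRoot hS _ _ => exact .inr ⟨hS, Finset.card_insert_le _ _⟩

lemma card_roots_lt (h : ExpTransition d G st st') (hcharged : RootsCharged d G st t)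
    (hcard : 5 * d * st.2.2.1.card < 6 * t + 5 * d) :
    5 * d * st'.2.2.1.card < 6 * (t + 1) + 5 * d := by
  rcases h.roots_eq_or_saturated with hA | ⟨hS, hA⟩
  · rw [hA]
    omega
  · have hpaid := hcharged.mul_card_le hS
    have := Nat.mul_le_mul_left (5 * d) hA
    rw [mul_add_one] at this
    omega

lemma rootsCharged (h : ExpTransition d G st st') (hG : ∀ v, G.degree v = d)
    (hF : IsCrossing G st.1 st.2.1) (hsparse : 6 * st.2.1.card ≤ d * st.1ᶜ.card)
    (hcharged : RootsCharged d G st t) : RootsCharged d G st' (t + 1) := by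
  intro hA'
  have hsub := h.explored_subset
  have hexposed := h.exposedDeg_le
  cases h
  case percolate | fail | idle =>
    obtain ⟨r, hr, hle⟩ := hcharged hA'
    refine ⟨r, hsub hr, ?_⟩
    have := hexposed r
    dsimp only at hle this ⊢
    omega
  case newRoot A _ _ _ _ w hS hw hmin =>
    have hdegS := hF.degS_le_degF (fun u hu => (hG u).trans_le (hS u hu)) hw
    have hdegF := hF.mul_degF_le_of_forall_le hsparse hw hmin
    have hpaid := hcharged.mul_card_le hS
    have hcard := Nat.mul_le_mul_left (5 * d) (Finset.card_insert_le w A)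
    rw [mul_add_one] at hcard
    refine ⟨w, Finset.mem_insert_self _ _, ?_⟩
    rw [exposedDeg_insert_filter_self]
    dsimp only at hdegS hdegF hpaid ⊢
    omega

end ExpTransition

end Transition

section Trajectory

variable {n d : ℕ} {G : SimpleGraph (Fin n)} (L : Fin n → Fin n → Fin d)
  (σ : Fin n → Equiv.Perm (Fin d)) (ω : Sym2 (Fin n) → Bool)

lemma expTransition_expTraj (t : ℕ) :
    ExpTransition d G (expTraj G L σ ω t) (expTraj G L σ ω (t + 1)) :=
  expTransition_expStep G L σ ω _

lemma expA_subset_expS (t : ℕ) : expA G L σ ω t ⊆ expS G L σ ω t := by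
  induction t with
  | zero => exact subset_rfl
  | succ t ih => exact (expTransition_expTraj L σ ω t).roots_subset_explored ih

lemma isCrossing_expF (t : ℕ) : IsCrossing G (expS G L σ ω t) (expF G L σ ω t) := by
  induction t with
  | zero => exact fun e he => absurd he (Finset.notMem_empty e)
  | succ t ih => exact (expTransition_expTraj L σ ω t).isCrossing ih

lemma card_expF_le (t : ℕ) : (expF G L σ ω t).card ≤ t := by
  induction t with
  | zero => exact le_rfl
  | succ t ih => exact (expTransition_expTraj L σ ω t).card_failed_le.trans (Nat.succ_le_succ ih)

lemma rootsCharged_expTraj (hG : ∀ v, G.degree v = d) (t : ℕ)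
    (hsparse : ∀ s < t, 6 * (expF G L σ ω s).card ≤ d * (expS G L σ ω s)ᶜ.card) :
    RootsCharged d G (expTraj G L σ ω t) t := by
  induction t with
  | zero => exact fun hA => absurd hA Finset.not_nonempty_empty
  | succ t ih =>
    exact (expTransition_expTraj L σ ω t).rootsCharged hG (isCrossing_expF L σ ω t)
      (hsparse t t.lt_succ_self) (ih fun s hs => hsparse s (hs.trans t.lt_succ_self))

lemma mul_card_expA_lt (hd : 0 < d) (hG : ∀ v, G.degree v = d) (t : ℕ)
    (hsparse : ∀ s < t, 6 * (expF G L σ ω s).card ≤ d * (expS G L σ ω s)ᶜ.card) :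
    5 * d * (expA G L σ ω t).card < 6 * t + 5 * d := by
  induction t with
  | zero => simpa [expA, expTraj] using hd
  | succ t ih =>
    have hsparse_lt := fun s hs => hsparse s (Nat.lt_succ_of_lt hs)
    exact (expTransition_expTraj L σ ω t).card_roots_lt
      (rootsCharged_expTraj L σ ω hG t hsparse_lt) (ih hsparse_lt)

end Trajectory

section Estimates

lemma mul_rpow_two_thirds_le {k x : ℝ} (hk : 0 ≤ k) (hx : 0 < x) (hkx : k ^ 3 ≤ x) :
    k * x ^ ((2 : ℝ) / 3) ≤ x := by
  have hroot : k ≤ x ^ ((3 : ℝ)⁻¹) := by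
    rw [Real.le_rpow_inv_iff_of_pos hk hx.le (by norm_num)]
    exact_mod_cast hkx
  calc k * x ^ ((2 : ℝ) / 3) ≤ x ^ ((3 : ℝ)⁻¹) * x ^ ((2 : ℝ) / 3) := by gcongr
    _ = x := by rw [← Real.rpow_add hx]; norm_num

lemma natCast_le_ceil_div {a d t : ℕ} (hd : 0 < d) (h : 5 * d * a < 6 * t + 5 * d) :
    (a : ℝ) ≤ (⌈(t : ℝ) / (5 * (d : ℝ) / 6)⌉ : ℤ) := by
  have h' : 5 * (d : ℝ) * a < 6 * t + 5 * d := by exact_mod_cast h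
  suffices (a : ℤ) ≤ ⌈(t : ℝ) / (5 * (d : ℝ) / 6)⌉ by exact_mod_cast this
  rw [Int.le_ceil_iff, lt_div_iff₀ (by positivity)]
  push_cast
  linarith

variable {n d s : ℕ}

lemma thirty_mul_le_card_compl {S A : Finset (Fin n)} {q : ℝ} (hd : 0 < d) (hAS : A ⊆ S)
    (hq : 1 ≤ q) (hqn : 45 * q ≤ n) (hs : (s : ℝ) ≤ 5 * d * q)
    (hSA : ((S \ A).card : ℝ) ≤ 8 * q) (hA : 5 * d * A.card < 6 * s + 5 * d) :
    30 * q ≤ (Sᶜ.card : ℝ) := by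
  have hcardA : (A.card : ℝ) ≤ 6 * q + 1 := by
    have hd' : (0 : ℝ) < d := by exact_mod_cast hd
    have hA' : 5 * (d : ℝ) * A.card < 6 * s + 5 * d := by exact_mod_cast hA
    refine le_of_mul_le_mul_left ?_ hd'
    linarith
  have hcardS : ((S \ A).card : ℝ) + A.card = S.card := by
    exact_mod_cast Finset.card_sdiff_add_card_eq_card hAS
  have hcompl : (Sᶜ.card : ℝ) + S.card = n := by
    exact_mod_cast (Finset.card_compl_add_card S).trans (Fintype.card_fin n)
  linarith

lemma six_mul_card_le_mul_card_compl {S : Finset (Fin n)} {F : Finset (Sym2 (Fin n))} {q : ℝ}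
    (hF : F.card ≤ s) (hs : (s : ℝ) ≤ 5 * d * q) (hS : 30 * q ≤ (Sᶜ.card : ℝ)) :
    6 * F.card ≤ d * Sᶜ.card := by
  have hF' : (F.card : ℝ) ≤ s := by exact_mod_cast hF
  have : (6 : ℝ) * F.card ≤ d * Sᶜ.card :=
    calc (6 : ℝ) * F.card ≤ d * (30 * q) := by linarith
      _ ≤ d * Sᶜ.card := by gcongr
  exact_mod_cast this

end Estimates

theorem statement_18_general {n d : ℕ} (hn : 45 ^ 3 ≤ n) (hd : 0 < d) {G : SimpleGraph (Fin n)}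
    (hG : ∀ v, G.degree v = d) (L : Fin n → Fin n → Fin d) (σ : Fin n → Equiv.Perm (Fin d))
    (ω : Sym2 (Fin n) → Bool) {t : ℕ} (ht : (t : ℝ) ≤ 5 * (d : ℝ) * (n : ℝ) ^ ((2 : ℝ) / 3))
    (hc : ∀ s ≤ t,
      ((expS G L σ ω s \ expA G L σ ω s).card : ℝ) ≤ 8 * (n : ℝ) ^ ((2 : ℝ) / 3)) :
    ((expA G L σ ω t).card : ℝ) ≤ ((Int.ceil ((t : ℝ) / (5 * (d : ℝ) / 6)) : ℤ) : ℝ) := by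
  have hn' : (45 : ℝ) ^ 3 ≤ n := by exact_mod_cast hn
  have hq : (1 : ℝ) ≤ (n : ℝ) ^ ((2 : ℝ) / 3) := Real.one_le_rpow (by linarith) (by norm_num)
  have hqn := mul_rpow_two_thirds_le (by norm_num) (by linarith) hn'
  suffices hbound : ∀ s ≤ t, 5 * d * (expA G L σ ω s).card < 6 * s + 5 * d from
    natCast_le_ceil_div hd (hbound t le_rfl)
  intro s
  induction s using Nat.strong_induction_on with
  | _ s ih =>
    intro hst
    refine mul_card_expA_lt L σ ω hd hG s fun r hrs => ?_
    have hrt : r ≤ t := hrs.le.trans hst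
    have hr : (r : ℝ) ≤ 5 * d * (n : ℝ) ^ ((2 : ℝ) / 3) := le_trans (by exact_mod_cast hrt) ht
    have hcompl := thirty_mul_le_card_compl hd (expA_subset_expS L σ ω r) hq hqn hr (hc r hrt)
      (ih r hrs hrt)
    exact six_mul_card_le_mul_card_compl (card_expF_le L σ ω r) hr hcompl

/-- **Claim in Lemma 4.3.** For `3 ≤ d ≤ n-1`, `n` sufficiently large, any realisation of
the exploration process (i.e. any `d`-regular input and percolation outcome) and any
`t ≤ 5 d n^{2/3}`: if `c_s = |S_s ∖ A_s| ≤ 8 n^{2/3}` for all `s ≤ t`, then the number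
`a_t = |A_t|` of vertices that started a new component satisfies
`a_t ≤ ⌈t/(5d/6)⌉`. -/
theorem statement_18 :
    ∃ N : ℕ, ∀ n : ℕ, N ≤ n → ∀ d : ℕ, 3 ≤ d → d ≤ n - 1 →
    ∀ G : SimpleGraph (Fin n), (∀ v, G.degree v = d) →
    ∀ L : Fin n → Fin n → Fin d, (∀ v : Fin n, Set.InjOn (L v) (G.neighborSet v)) →
    ∀ σ : Fin n → Equiv.Perm (Fin d), ∀ ω : Sym2 (Fin n) → Bool,
    ∀ t : ℕ, (t : ℝ) ≤ 5 * (d : ℝ) * (n : ℝ) ^ ((2 : ℝ) / 3) →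
    (∀ s ≤ t, ((expS G L σ ω s \ expA G L σ ω s).card : ℝ) ≤ 8 * (n : ℝ) ^ ((2 : ℝ) / 3)) →
    ((expA G L σ ω t).card : ℝ) ≤ ((Int.ceil ((t : ℝ) / (5 * (d : ℝ) / 6)) : ℤ) : ℝ) :=
  ⟨45 ^ 3, fun _ hn _ hd _ _ hG L _ σ ω _ ht hc =>
    statement_18_general hn (by omega) hG L σ ω ht hc⟩
end
end
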